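/- Let n, r ≥ 1, let a = diag(a₁, …, aₙ) be a diagonal n×n complex matrix with distinct diagonal entries, let b be an r×r complex matrix, F, G n×r complex matrices, fix an index i, and let eᵢ ∈ ℂⁿ be the i-th standard basis vector. Suppose u : ℂ → ℂⁿ, v : ℂ → ℂʳ and λ : ℂ → ℂ are differentiable at 0, with u(0) = eᵢ, v(0) = 0, λ(0) = aᵢ, and suppose that for all ε ≠ 0 in some punctured neighbourhood of 0: (a − λ(ε)Iₙ)u(ε) − F v(ε) = 0 and ε Gᵀu(ε) − ε b v(ε) + v(ε) = 0. Then v′(0) = −Gᵀeᵢ and (a − aᵢIₙ)u′(0) = λ′(0)eᵢ − FGᵀeᵢ; in particular, for every j ≠ i, the j-th component of u′(0) equals −(FGᵀ)ⱼᵢ/(aⱼ − aᵢ). -/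

import Mathlib

open Matrix Topology

/-!
Since `v = ε(bv - Gᵀu)`, the derivative of `v` at `0` is the value of `bv - Gᵀu` there. The first
equation says `(a - λ(0))u = (λ - λ(0))u + Fv`, where both terms on the right are differentiable
at `0` even if `u` is only continuous: a product with a factor vanishing at the base point needs no
more. A left eigenvector of `a` for `μ ≠ λ(0)` annihilates `u(0)` because `v(0) = 0`, so pairing
with it removes the `λ′(0)` term and leaves a factor `μ - λ(0)`.
-/

section InhomogeneousEigenvectors

variable {𝕜 E : Type*} [NontriviallyNormedField 𝕜] [NormedAddCommGroup E] [NormedSpace 𝕜 E]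

theorem hasDerivAt_smul_of_eq_zero {c : 𝕜 → 𝕜} {g : 𝕜 → E} {x c' : 𝕜}
    (hc : HasDerivAt c c' x) (hcx : c x = 0) (hg : ContinuousAt g x) :
    HasDerivAt (fun y ↦ c y • g y) (c' • g x) x := by
  have hslope : slope (fun y ↦ c y • g y) x = fun y ↦ slope c x y • g y := by
    ext y
    simp [slope_def_module, hcx, smul_smul]
  rw [hasDerivAt_iff_tendsto_slope, hslope]
  exact hc.tendsto_slope.smul (hg.tendsto.mono_left nhdsWithin_le_nhds)

variable {A : E → E} {u w : 𝕜 → E} {w' : E} {lam : 𝕜 → 𝕜} {lam' x : 𝕜}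

theorem hasDerivAt_apply_sub_smul (hu : ContinuousAt u x) (hlam : HasDerivAt lam lam' x)
    (hw : HasDerivAt w w' x) (heq : ∀ᶠ y in 𝓝 x, A (u y) - lam y • u y = w y) :
    HasDerivAt (fun y ↦ A (u y) - lam x • u y) (lam' • u x + w') x := by
  have hderiv := (hasDerivAt_smul_of_eq_zero (hlam.sub_const (lam x)) (sub_self _) hu).add hw
  refine hderiv.congr_of_eventuallyEq (heq.mono fun y hy ↦ ?_)
  simp only [Pi.add_apply, ← hy, sub_smul]
  abel

theorem hasDerivAt_apply_of_left_eigenvector {φ : E →L[𝕜] 𝕜} {μ : 𝕜}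
    (hφ : ∀ e, φ (A e) = μ * φ e) (hμ : μ ≠ lam x) (hu : ContinuousAt u x)
    (hlam : HasDerivAt lam lam' x) (hw : HasDerivAt w w' x) (hwx : w x = 0)
    (heq : ∀ᶠ y in 𝓝 x, A (u y) - lam y • u y = w y) :
    HasDerivAt (fun y ↦ φ (u y)) (φ w' / (μ - lam x)) x := by
  have hμ' : μ - lam x ≠ 0 := sub_ne_zero.2 hμ
  have hφux : φ (u x) = 0 := by
    have h : (μ - lam x) * φ (u x) = 0 := by
      simpa [hφ, hwx, sub_mul] using congrArg φ heq.self_of_nhds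
    exact (mul_eq_zero.1 h).resolve_left hμ'
  have hφA : ∀ e, φ (A e - lam x • e) = (μ - lam x) * φ e := fun e ↦ by
    rw [map_sub, map_smul, hφ, smul_eq_mul, sub_mul]
  have hderiv := φ.hasFDerivAt.comp_hasDerivAt x (hasDerivAt_apply_sub_smul hu hlam hw heq)
  simpa [Function.comp_def, -map_sub, hφA, hφux, hμ'] using hderiv.div_const (μ - lam x)

end InhomogeneousEigenvectors

section Matrices

variable {𝕜 ι κ : Type*} [NontriviallyNormedField 𝕜] [Fintype κ]

/-- The pairing with a row vector `p`, as a continuous linear functional on column vectors.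
Continuity is proved directly because `LinearMap.toContinuousLinearMap` requires a complete
field. -/
def dotProductCLM (p : κ → 𝕜) : (κ → 𝕜) →L[𝕜] 𝕜 where
  toLinearMap := dotProductBilin 𝕜 𝕜 p
  cont := continuous_const.dotProduct continuous_id

@[simp]
theorem dotProductCLM_apply (p x : κ → 𝕜) : dotProductCLM p x = p ⬝ᵥ x := rfl

theorem hasDerivAt_const_mulVec [Finite ι] (M : Matrix ι κ 𝕜) {v : 𝕜 → κ → 𝕜} {v' : κ → 𝕜}
    {x : 𝕜} (hv : HasDerivAt v v' x) : HasDerivAt (fun y ↦ M *ᵥ v y) (M *ᵥ v') x := by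
  have := Fintype.ofFinite ι
  exact hasDerivAt_pi.2 fun i ↦ (dotProductCLM (M i)).hasFDerivAt.comp_hasDerivAt x hv

theorem stmt_13_general [Fintype ι] [DecidableEq ι] (A : Matrix ι ι 𝕜) (B : Matrix κ κ 𝕜)
    (F G : Matrix ι κ 𝕜) {u : 𝕜 → ι → 𝕜} {v : 𝕜 → κ → 𝕜} {lam : 𝕜 → 𝕜} {u₀ : ι → 𝕜} {lam₀ : 𝕜}
    (hu : ContinuousAt u 0) (hv : ContinuousAt v 0) (hlam : DifferentiableAt 𝕜 lam 0)
    (hu0 : u 0 = u₀) (hlam0 : lam 0 = lam₀)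
    (heq : ∀ᶠ ε in 𝓝[≠] (0 : 𝕜),
      (A - lam ε • 1) *ᵥ u ε - F *ᵥ v ε = 0 ∧ ε • Gᵀ *ᵥ u ε - ε • B *ᵥ v ε + v ε = 0) :
    HasDerivAt v (-(Gᵀ *ᵥ u₀)) 0
    ∧ HasDerivAt (fun ε ↦ (A - lam₀ • 1) *ᵥ u ε) (deriv lam 0 • u₀ - (F * Gᵀ) *ᵥ u₀) 0
    ∧ ∀ (p : ι → 𝕜) (μ : 𝕜), p ᵥ* A = μ • p → μ ≠ lam₀ →
        HasDerivAt (fun ε ↦ p ⬝ᵥ u ε) (-(p ⬝ᵥ (F * Gᵀ) *ᵥ u₀) / (μ - lam₀)) 0 := by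
  subst hu0 hlam0
  have hlamc := hlam.continuousAt
  have hv_eq : v =ᶠ[𝓝 0] fun ε ↦ ε • (B *ᵥ v ε - Gᵀ *ᵥ u ε) := by
    refine (hv.eventuallyEq_nhds_iff_eventuallyEq_nhdsNE (by fun_prop)).1 (heq.mono fun ε hε ↦ ?_)
    linear_combination (norm := module) hε.2
  have hu_eq : (fun ε ↦ A *ᵥ u ε - lam ε • u ε) =ᶠ[𝓝 0] fun ε ↦ F *ᵥ v ε := by
    refine (ContinuousAt.eventuallyEq_nhds_iff_eventuallyEq_nhdsNE (by fun_prop) (by fun_prop)).1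
      (heq.mono fun ε hε ↦ ?_)
    simpa [sub_mulVec, smul_mulVec, sub_eq_zero] using hε.1
  have hv0 : v 0 = 0 := by simpa using hv_eq.eq_of_nhds
  have hv' : HasDerivAt v (-(Gᵀ *ᵥ u 0)) 0 := by
    have hderiv := hasDerivAt_smul_of_eq_zero (hasDerivAt_id (0 : 𝕜)) rfl
      (g := fun ε ↦ B *ᵥ v ε - Gᵀ *ᵥ u ε) (by fun_prop)
    simpa [hv0] using hderiv.congr_of_eventuallyEq hv_eq
  have hFv' : HasDerivAt (fun ε ↦ F *ᵥ v ε) (-((F * Gᵀ) *ᵥ u 0)) 0 := by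
    simpa [mulVec_neg] using hasDerivAt_const_mulVec F hv'
  refine ⟨hv', ?_, fun p μ hp hμ ↦ ?_⟩
  · simpa [sub_mulVec, smul_mulVec, ← sub_eq_add_neg] using
      hasDerivAt_apply_sub_smul hu hlam.hasDerivAt hFv' hu_eq
  · have hpA : ∀ x, dotProductCLM p (A *ᵥ x) = μ * dotProductCLM p x := fun x ↦ by
      simp [dotProduct_mulVec, hp]
    simpa using hasDerivAt_apply_of_left_eigenvector hpA hμ hu hlam.hasDerivAt hFv'
      (by simp [hv0]) hu_eq

end Matrices

/-- Expansion of a solution of the spectral-curve equations near the point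
`yᵢ` (`z = ∞`, `λ = aᵢ`) of the spectral curve (Section 5 of the paper):
with `ε = z⁻¹` and `u(0) = eᵢ`, `v(0) = 0`, `λ(0) = aᵢ`, the equations
`(a - λ(ε))u(ε) - Fv(ε) = 0`, `εGᵀu(ε) - εbv(ε) + v(ε) = 0` on a punctured
neighbourhood of `0` force `v′(0) = -Gᵀeᵢ`,
`(a - aᵢI)u′(0) = λ′(0)eᵢ - FGᵀeᵢ`, and in particular
`u′(0)ⱼ = -(FGᵀ)ⱼᵢ/(aⱼ - aᵢ)` for `j ≠ i`. -/
theorem stmt_13 (n r : ℕ) (hn : 1 ≤ n) (hr : 1 ≤ r)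
    (a : Fin n → ℂ) (ha : Function.Injective a)
    (b : Matrix (Fin r) (Fin r) ℂ) (F G : Matrix (Fin n) (Fin r) ℂ)
    (i : Fin n)
    (u : ℂ → Fin n → ℂ) (v : ℂ → Fin r → ℂ) (lam : ℂ → ℂ)
    (hu : DifferentiableAt ℂ u 0) (hv : DifferentiableAt ℂ v 0)
    (hlam : DifferentiableAt ℂ lam 0)
    (hu0 : u 0 = Pi.single i 1) (hv0 : v 0 = 0) (hlam0 : lam 0 = a i)
    (heq : ∀ᶠ ε in 𝓝[≠] (0 : ℂ),
      (Matrix.diagonal a - lam ε • 1).mulVec (u ε) - F.mulVec (v ε) = 0 ∧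
      ε • Gᵀ.mulVec (u ε) - ε • b.mulVec (v ε) + v ε = 0) :
    deriv v 0 = -(Gᵀ.mulVec (Pi.single i 1))
    ∧ (Matrix.diagonal a - a i • 1).mulVec (deriv u 0)
        = deriv lam 0 • (Pi.single i 1 : Fin n → ℂ) - (F * Gᵀ).mulVec (Pi.single i 1)
    ∧ ∀ j, j ≠ i → deriv u 0 j = -((F * Gᵀ) j i) / (a j - a i) := by
  obtain ⟨hv', hAu', hp⟩ :=
    stmt_13_general (diagonal a) b F G hu.continuousAt hv.continuousAt hlam hu0 hlam0 heq
  exact ⟨hv'.deriv, (hasDerivAt_const_mulVec _ hu.hasDerivAt).unique hAu',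
    fun j hj ↦ (hasDerivAt_pi.1 hu.hasDerivAt j).unique <| by
      simpa using hp (Pi.single j 1) (a j) (by simp [← Pi.single_smul]) (ha.ne hj)⟩
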